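/- arXiv:2501.03834 — 2 statements merged into one kernel-verified Lean document; each statement's English description precedes it below -/
import Mathlib

section
/- For any two interior-disjoint horizontal-greedy δ-matchings π and π' (possibly with different starting points), we have |C(π) ∩ C(π')| ≤ 1 or |R(π) ∩ R(π')| ≤ 1. -/
open Set

noncomputable section

/-- `R : [1, n] → ℝ` is a one-dimensional polygonal curve with vertices
`R 1, …, R n`: it is affine on each interval `[k, k+1]`. -/
def IsPoly1D (R : ℝ → ℝ) (n : ℕ) : Prop :=
  ∀ k : ℕ, 1 ≤ k → k < n → ∀ x ∈ Icc (k : ℝ) ((k : ℝ) + 1),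
    R x = R (k : ℝ) + (x - (k : ℝ)) * (R ((k : ℝ) + 1) - R (k : ℝ))

/-- General position: the vertex values are pairwise distinct. -/
def GeneralPosition (R : ℝ → ℝ) (n : ℕ) : Prop :=
  ∀ k l : ℕ, 1 ≤ k → k ≤ n → 1 ≤ l → l ≤ n → k ≠ l → R (k : ℝ) ≠ R (l : ℝ)

/-- The `δ`-free space `F_δ = {(x,y) ∈ [1,n] × [1,m] : B y − R x ≤ δ}`. -/
def freeSpace (R B : ℝ → ℝ) (n m : ℕ) (δ : ℝ) : Set (ℝ × ℝ) :=
  {p : ℝ × ℝ | p.1 ∈ Icc (1:ℝ) (n : ℝ) ∧ p.2 ∈ Icc (1:ℝ) (m : ℝ) ∧ B p.2 - R p.1 ≤ δ}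

/-- `A i'` is a prefix-minimum of `A[i, ∞)`: `|A i'| ≤ |A x|` for all `x ∈ [i, i']`. -/
def PrefixMin (A : ℝ → ℝ) (i i' : ℤ) : Prop :=
  i ≤ i' ∧ ∀ x ∈ Icc (i : ℝ) (i' : ℝ), |A (i' : ℝ)| ≤ |A x|

/-- A rectilinear path, given by its sequence of vertices (endpoints and
turning points). -/
structure RectPath where
  N : ℕ
  vert : Fin (N + 1) → ℝ × ℝ

/-- The last vertex (endpoint) of a rectilinear path. -/
def RectPath.last (π : RectPath) : ℝ × ℝ := π.vert (Fin.last π.N)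

/-- The image of a rectilinear path: the union of the segments between
consecutive vertices. -/
def RectPath.image (π : RectPath) : Set (ℝ × ℝ) :=
  insert (π.vert 0) (⋃ k : Fin π.N, segment ℝ (π.vert k.castSucc) (π.vert k.succ))

/-- Each edge of the path is an axis-parallel segment, and the path is
nondecreasing in both coordinates. -/
def RectPath.IsRectilinear (π : RectPath) : Prop :=
  ∀ k : Fin π.N,
    ((π.vert k.castSucc).1 = (π.vert k.succ).1 ∧ (π.vert k.castSucc).2 < (π.vert k.succ).2) ∨
    ((π.vert k.castSucc).2 = (π.vert k.succ).2 ∧ (π.vert k.castSucc).1 < (π.vert k.succ).1)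

/-- A prefix-minima `δ`-matching starting at the integer point `s = (i, j)`:
a monotone rectilinear path inside the `δ`-free space starting at `s`, all of
whose vertices are integer points `(i', j')` with `R i'` a prefix-minimum of
`R[i, n]` and `B j'` a prefix-minimum of `B[j, m]`. -/
def IsPMMatching (R B : ℝ → ℝ) (n m : ℕ) (δ : ℝ) (s : ℤ × ℤ) (π : RectPath) : Prop :=
  π.IsRectilinear ∧
  π.vert 0 = ((s.1 : ℝ), (s.2 : ℝ)) ∧
  π.image ⊆ freeSpace R B n m δ ∧
  ∀ k : Fin (π.N + 1), ∃ i' j' : ℤ,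
    π.vert k = ((i' : ℝ), (j' : ℝ)) ∧ PrefixMin R s.1 i' ∧ PrefixMin B s.2 j'

/-- A horizontal-greedy `δ`-matching starting at `s`: a prefix-minima
`δ`-matching that, from any integer prefix-minima point `(i', j')` on it, either
traverses any available horizontal free-space segment `[i', î] × {j'}` towards a
further prefix-minimum `R î`, or terminates at `(i', j')`. -/
def IsHorizGreedy (R B : ℝ → ℝ) (n m : ℕ) (δ : ℝ) (s : ℤ × ℤ) (π : RectPath) : Prop :=
  IsPMMatching R B n m δ s π ∧
  ∀ i' j' : ℤ, ((i' : ℝ), (j' : ℝ)) ∈ π.image →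
    PrefixMin R s.1 i' → PrefixMin B s.2 j' →
    ∀ ihat : ℤ, i' < ihat → PrefixMin R s.1 ihat →
      (Icc (i' : ℝ) (ihat : ℝ) ×ˢ ({(j' : ℝ)} : Set ℝ) ⊆ freeSpace R B n m δ) →
      (Icc (i' : ℝ) (ihat : ℝ) ×ˢ ({(j' : ℝ)} : Set ℝ) ⊆ π.image ∨
        π.last = ((i' : ℝ), (j' : ℝ)))

/-- `C(π)`: the set of integers `i` such that `π` has a vertical edge contained
in the line `x = i`. -/
def vertLines (π : RectPath) : Set ℤ :=
  {i : ℤ | ∃ k : Fin π.N, (π.vert k.castSucc).1 = (i : ℝ) ∧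
    (π.vert k.castSucc).1 = (π.vert k.succ).1}

/-- `R(π)`: the set of integers `j` such that `π` has a horizontal edge contained
in the line `y = j`. -/
def horizLines (π : RectPath) : Set ℤ :=
  {j : ℤ | ∃ k : Fin π.N, (π.vert k.castSucc).2 = (j : ℝ) ∧
    (π.vert k.castSucc).2 = (π.vert k.succ).2}

/-- Two paths are interior-disjoint if their images share no point that is, for
both paths, distinct from that path's two endpoints. -/
def InteriorDisjoint (π π' : RectPath) : Prop :=
  ∀ p ∈ π.image ∩ π'.image,
    (p = π.vert 0 ∨ p = π.last) ∨ (p = π'.vert 0 ∨ p = π'.last)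

/-- A horizontal-greedy `δ`-matching starting at `s` is maximal if it is not a
proper initial portion of another horizontal-greedy `δ`-matching starting at `s`. -/
def IsMaximalHG (R B : ℝ → ℝ) (n m : ℕ) (δ : ℝ) (s : ℤ × ℤ) (π : RectPath) : Prop :=
  IsHorizGreedy R B n m δ s π ∧
  ∀ π' : RectPath, IsHorizGreedy R B n m δ s π' → π.image ⊆ π'.image →
    π'.image = π.image

theorem RectPath.vert_mono {π : RectPath} (h : π.IsRectilinear) : Monotone π.vert := by
  refine Fin.monotone_iff_le_succ.2 fun k => ?_
  rcases h k with ⟨h1, h2⟩ | ⟨h1, h2⟩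
  · exact ⟨h1.le, h2.le⟩
  · exact ⟨h2.le, h1.le⟩

theorem RectPath.seg_sub {π : RectPath} (k : Fin π.N) :
    segment ℝ (π.vert k.castSucc) (π.vert k.succ) ⊆ π.image := by
  intro p hp
  exact Or.inr (mem_iUnion.2 ⟨k, hp⟩)

theorem RectPath.edge_v {π : RectPath} (k : Fin π.N)
    (h : (π.vert k.castSucc).1 = (π.vert k.succ).1) (y : ℝ)
    (hy : (π.vert k.castSucc).2 ≤ y) (hy' : y ≤ (π.vert k.succ).2) :
    ((π.vert k.castSucc).1, y) ∈ π.image := by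
  apply RectPath.seg_sub k
  have : π.vert k.succ = ((π.vert k.castSucc).1, (π.vert k.succ).2) := by rw [h]
  rw [this]
  have h2 : π.vert k.castSucc = ((π.vert k.castSucc).1, (π.vert k.castSucc).2) := rfl
  rw [h2, ← Prod.image_mk_segment_right, segment_eq_Icc (hy.trans hy')]
  exact ⟨y, ⟨hy, hy'⟩, rfl⟩

theorem RectPath.vert_mem {π : RectPath} (k : Fin (π.N + 1)) : π.vert k ∈ π.image := by
  induction k using Fin.cases with
  | zero => exact Or.inl rfl
  | succ k => exact RectPath.seg_sub k (right_mem_segment ℝ _ _)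

theorem seg_le {a b p : ℝ × ℝ} (h : a ≤ b) (hp : p ∈ segment ℝ a b) : a ≤ p ∧ p ≤ b :=
  segment_subset_Icc h hp

theorem RectPath.le_last {π : RectPath} (h : π.IsRectilinear) {p : ℝ × ℝ} (hp : p ∈ π.image) :
    p ≤ π.last := by
  rcases hp with rfl | hp
  · exact vert_mono h (Fin.le_last _)
  · obtain ⟨k, hk⟩ := mem_iUnion.1 hp
    exact (seg_le (vert_mono h (Fin.castSucc_lt_succ).le) hk).2.trans
      (vert_mono h (Fin.le_last _))

theorem RectPath.zero_le {π : RectPath} (h : π.IsRectilinear) {p : ℝ × ℝ} (hp : p ∈ π.image) :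
    π.vert 0 ≤ p := by
  rcases hp with rfl | hp
  · exact le_rfl
  · obtain ⟨k, hk⟩ := mem_iUnion.1 hp
    exact (vert_mono h (Fin.zero_le _)).trans
      (seg_le (vert_mono h (Fin.castSucc_lt_succ).le) hk).1

theorem RectPath.chain {π : RectPath} (h : π.IsRectilinear) {p q : ℝ × ℝ}
    (hp : p ∈ π.image) (hq : q ∈ π.image) : p ≤ q ∨ q ≤ p := by
  have hp' := hp
  have hq' := hq
  rcases hp with rfl | hp
  · exact Or.inl (zero_le h hq)
  rcases hq with rfl | hq
  · exact Or.inr (zero_le h hp')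
  obtain ⟨k, hk⟩ := mem_iUnion.1 hp
  obtain ⟨l, hl⟩ := mem_iUnion.1 hq
  have ek := seg_le (vert_mono h (Fin.castSucc_lt_succ).le) hk
  have el := seg_le (vert_mono h (Fin.castSucc_lt_succ).le) hl
  rcases lt_trichotomy k l with hkl | rfl | hkl
  · left
    exact ek.2.trans ((vert_mono h (by simpa [Fin.le_def] using hkl)).trans el.1)
  · obtain ⟨⟨a1, a2⟩, a3, a4⟩ := ek
    obtain ⟨⟨b1, b2⟩, b3, b4⟩ := el
    rcases h k with ⟨h1, h2⟩ | ⟨h1, h2⟩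
    · have : p.1 = q.1 := by linarith
      rcases le_total p.2 q.2 with h | h
      · exact Or.inl ⟨this.le, h⟩
      · exact Or.inr ⟨this.ge, h⟩
    · have : p.2 = q.2 := by linarith
      rcases le_total p.1 q.1 with h | h
      · exact Or.inl ⟨h, this.le⟩
      · exact Or.inr ⟨h, this.ge⟩
  · right
    exact el.2.trans ((vert_mono h (by simpa [Fin.le_def] using hkl)).trans ek.1)

/-- two image points, one strictly higher: it is weakly to the right. -/
theorem RectPath.right_of_lt {π : RectPath} (h : π.IsRectilinear) {a b c d : ℝ}
    (hp : (a, b) ∈ π.image) (hq : (c, d) ∈ π.image) (hbd : b < d) : a ≤ c := by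
  rcases chain h hp hq with h | h
  · exact h.1
  · exact absurd h.2 (not_le.2 hbd)

theorem RectPath.up_of_lt {π : RectPath} (h : π.IsRectilinear) {a b c d : ℝ}
    (hp : (a, b) ∈ π.image) (hq : (c, d) ∈ π.image) (hbd : a < c) : b ≤ d := by
  rcases chain h hp hq with h | h
  · exact h.2
  · exact absurd h.1 (not_le.2 hbd)

theorem fin_cross {N : ℕ} (P : Fin (N + 1) → Prop) (h0 : P 0) (hj : ¬ P (Fin.last N)) :
    ∃ k : Fin N, P k.castSucc ∧ ¬ P k.succ := by
  by_contra! hc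
  exact hj (Fin.induction (motive := P) h0 hc (Fin.last N))

theorem poly_ge {R : ℝ → ℝ} {n : ℕ} (hR : IsPoly1D R n) {a b : ℤ} (ha : 1 ≤ a) (hb : b ≤ n)
    {c : ℝ} (hc : ∀ k : ℤ, a ≤ k → k ≤ b → c ≤ R k) (x : ℝ) (hx : (a : ℝ) ≤ x)
    (hx' : x ≤ b) : c ≤ R x := by
  have h1 : a ≤ ⌊x⌋ := Int.le_floor.2 hx
  have h2 : (⌊x⌋ : ℝ) ≤ x := Int.floor_le x
  have h3 : x < ⌊x⌋ + 1 := Int.lt_floor_add_one x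
  have h4 : ⌊x⌋ ≤ b := by exact_mod_cast h2.trans hx'
  rcases h4.eq_or_lt with h4 | h4
  · have : x = b := le_antisymm hx' (by rw [← h4]; exact h2)
    rw [this]
    exact hc b (by omega) le_rfl
  · obtain ⟨k, hk⟩ := Int.eq_ofNat_of_zero_le (show 0 ≤ ⌊x⌋ by omega)
    have e := hR k (by omega) (by omega) x
    have hkr : ((⌊x⌋ : ℤ) : ℝ) = (k : ℝ) := by rw [hk]; simp
    rw [hkr] at h2 h3
    have e := e ⟨h2, h3.le⟩
    have c1 := hc ⌊x⌋ h1 h4.le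
    have c2 := hc (⌊x⌋ + 1) (by omega) (by omega)
    push_cast at c2
    rw [hkr] at c1 c2
    rw [e]
    nlinarith

theorem pm_R {R : ℝ → ℝ} {n : ℕ} (hsepR : ∀ x ∈ Icc (1:ℝ) (n : ℝ), R x ≤ 0) {s i : ℤ}
    (hs : (1:ℝ) ≤ s) (hi : (i : ℝ) ≤ n) (h : PrefixMin R s i) (x : ℝ) (hx : (s : ℝ) ≤ x)
    (hx' : x ≤ i) : R x ≤ R i := by
  have := h.2 x ⟨hx, hx'⟩
  rw [abs_of_nonpos (hsepR x ⟨by linarith, by linarith⟩),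
    abs_of_nonpos (hsepR i ⟨by linarith, by linarith⟩)] at this
  linarith

theorem pm_B {B : ℝ → ℝ} {m : ℕ} (hsepB : ∀ x ∈ Icc (1:ℝ) (m : ℝ), 0 ≤ B x) {s i : ℤ}
    (hs : (1:ℝ) ≤ s) (hi : (i : ℝ) ≤ m) (h : PrefixMin B s i) (x : ℝ) (hx : (s : ℝ) ≤ x)
    (hx' : x ≤ i) : B i ≤ B x := by
  have := h.2 x ⟨hx, hx'⟩
  rwa [abs_of_nonneg (hsepB x ⟨by linarith, by linarith⟩),
    abs_of_nonneg (hsepB i ⟨by linarith, by linarith⟩)] at this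

/-- A column `z ∈ [a,b)` minimizing `R` on `[a,b]`. -/
theorem exists_argmin {R : ℝ → ℝ} {n : ℕ} (hR : IsPoly1D R n) {a b : ℤ} (ha : 1 ≤ a)
    (hb : b ≤ n) (hab : a < b) (hRab : R a ≤ R b) :
    ∃ z : ℤ, a ≤ z ∧ z < b ∧ ∀ x : ℝ, (a : ℝ) ≤ x → x ≤ b → R z ≤ R x := by
  obtain ⟨z, hz, hz'⟩ := Finset.exists_min_image (Finset.Ico a b) (fun k : ℤ => R k)
    ⟨a, by simp [hab]⟩
  rw [Finset.mem_Ico] at hz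
  refine ⟨z, hz.1, hz.2, poly_ge hR ha hb ?_⟩
  intro k hk hk'
  rcases hk'.eq_or_lt with rfl | hk'
  · exact (hz' a (by simp [hab])).trans hRab
  · exact hz' k (by simp [hk, hk'])

/-- Greedy crossing lemma. -/
theorem greedy_cross {n m : ℕ} {R B : ℝ → ℝ} (hB : IsPoly1D B m)
    (hsepB : ∀ y ∈ Icc (1:ℝ) (m : ℝ), 0 ≤ B y)
    {δ : ℝ} {s : ℤ × ℤ} {π : RectPath} (hπ : IsHorizGreedy R B n m δ s π)
    {a b z : ℤ} (hV : a ∈ vertLines π) (hbp : PrefixMin R s.1 b) (hbl : (b : ℝ) ≤ π.last.1)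
    (haz : a ≤ z) (hzb : z < b) (hz : ∀ x : ℝ, (a : ℝ) ≤ x → x ≤ b → R z ≤ R x) :
    ∃ y : ℤ, s.2 ≤ y ∧ B y ≤ δ + R z ∧ (∀ k : ℤ, s.2 ≤ k → B k ≤ δ + R z → y ≤ k) ∧
      ∀ x : ℝ, (z : ℝ) ≤ x → x ≤ b → (x, (y : ℝ)) ∈ π.image := by
  obtain ⟨⟨hrect, h0, hfree, hpm⟩, hgr⟩ := hπ
  obtain ⟨k, hk1, hk2⟩ := hV
  have hkup : (π.vert k.castSucc).2 < (π.vert k.succ).2 := by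
    rcases hrect k with h | h
    · exact h.2
    · exact absurd hk2 h.2.ne
  obtain ⟨a', y0, hv, hap, hy0p⟩ := hpm k.castSucc
  obtain ⟨a'', y1, hv', -, -⟩ := hpm k.succ
  rw [hv] at hk1 hk2 hkup
  rw [hv'] at hk2 hkup
  simp only at hk1 hk2 hkup
  have ea : a' = a := by exact_mod_cast hk1
  subst ea
  have mem0 : ((a' : ℝ), (y0 : ℝ)) ∈ π.image := hv ▸ RectPath.vert_mem _
  have mem1 : ((a' : ℝ), (y1 : ℝ)) ∈ π.image := by
    rw [hk2]; exact hv' ▸ RectPath.vert_mem _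
  have hs : π.vert 0 ∈ freeSpace R B n m δ := hfree (RectPath.vert_mem _)
  rw [h0] at hs
  obtain ⟨⟨hs1, -⟩, ⟨hs2, -⟩, -⟩ := hs
  simp only at hs1 hs2
  have hlast : π.last ∈ freeSpace R B n m δ := hfree (RectPath.vert_mem _)
  have hbn : (b : ℝ) ≤ n := hbl.trans hlast.1.2
  have haR : (s.1 : ℝ) ≤ a' := by exact_mod_cast hap.1
  have hazR : (a' : ℝ) ≤ z := by exact_mod_cast haz
  have hzbR : (z : ℝ) < b := by exact_mod_cast hzb
  -- goodness
  have good : ∀ (x : ℤ) (y : ℤ), (a' : ℝ) ≤ x → (1:ℝ) ≤ y → (y : ℝ) ≤ m → B y ≤ δ + R z →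
      Icc (x : ℝ) (b : ℝ) ×ˢ ({(y : ℝ)} : Set ℝ) ⊆ freeSpace R B n m δ := by
    rintro x y hx hy1 hym hBy ⟨u, v⟩ ⟨⟨hu1, hu2⟩, hv⟩
    simp only [mem_singleton_iff] at hv hu1 hu2
    subst hv
    refine ⟨⟨by simp only; linarith, by simp only; linarith⟩, ⟨hy1, hym⟩, ?_⟩
    have := hz u (by linarith) hu2
    simp only
    linarith
  have f0 := hfree mem0
  obtain ⟨-, ⟨hy01, hy0m⟩, -⟩ := f0
  simp only at hy01 hy0m
  have hy0B : δ + R z < B y0 := by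
    by_contra! hc
    rcases hgr a' y0 mem0 hap hy0p b (by omega) hbp (good a' y0 le_rfl hy01 hy0m hc) with h | h
    · have hb0 : ((b : ℝ), (y0 : ℝ)) ∈ π.image :=
        h ⟨⟨by simp only; linarith, le_rfl⟩, rfl⟩
      have := RectPath.right_of_lt hrect hb0 mem1 hkup
      linarith
    · have := (RectPath.le_last hrect mem1).2
      rw [h] at this
      simp only at this
      linarith
  -- the crossing horizontal edge
  obtain ⟨l, hl1, hl2⟩ := fin_cross (fun k => (π.vert k).1 ≤ z)
    (by rw [h0]; simp only; linarith) (by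
      have : (b : ℝ) ≤ (π.vert (Fin.last π.N)).1 := hbl
      linarith)
  rw [not_le] at hl2
  have hlh : (π.vert l.castSucc).2 = (π.vert l.succ).2 := by
    rcases hrect l with h | h
    · linarith [h.1]
    · exact h.1
  obtain ⟨c, r, hc, -, hrp⟩ := hpm l.castSucc
  obtain ⟨d, r', hd, -, -⟩ := hpm l.succ
  rw [hc] at hl1 hlh
  rw [hd] at hl2 hlh
  simp only at hl1 hl2 hlh
  have er : r = r' := by exact_mod_cast hlh
  subst er
  have memc : ((c : ℝ), (r : ℝ)) ∈ π.image := hc ▸ RectPath.vert_mem _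
  have memd : ((d : ℝ), (r : ℝ)) ∈ π.image := hd ▸ RectPath.vert_mem _
  have memz : ((z : ℝ), (r : ℝ)) ∈ π.image := by
    apply RectPath.seg_sub l
    rw [hc, hd, ← Prod.image_mk_segment_left, segment_eq_Icc (hl1.trans hl2.le)]
    exact ⟨z, ⟨hl1, hl2.le⟩, rfl⟩
  have hrB : B r ≤ δ + R z := by
    have := (hfree memz).2.2
    simp only at this
    linarith
  have hrm : (r : ℝ) ≤ m := (hfree memz).2.1.2
  obtain ⟨y, ⟨hys, hyB⟩, hymin⟩ := Int.exists_least_of_bdd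
    (P := fun k : ℤ => s.2 ≤ k ∧ B k ≤ δ + R z) ⟨s.2, fun k hk => hk.1⟩ ⟨r, hrp.1, hrB⟩
  have hyr : y ≤ r := hymin r ⟨hrp.1, hrB⟩
  have hyrR : (y : ℝ) ≤ r := by exact_mod_cast hyr
  have hysR : (s.2 : ℝ) ≤ y := by exact_mod_cast hys
  have hs2' : (1 : ℤ) ≤ s.2 := by exact_mod_cast hs2
  have hym : y ≤ m := by exact_mod_cast hyrR.trans hrm
  have hyp : PrefixMin B s.2 y := by
    refine ⟨hys, fun x hx => ?_⟩
    have := poly_ge hB hs2' hym (c := B y) (fun k hk hk' => by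
      by_contra! hlt
      have := hymin k ⟨hk, hlt.le.trans hyB⟩
      have : k = y := by omega
      subst this
      exact lt_irrefl _ hlt) x hx.1 hx.2
    have hymR : (y : ℝ) ≤ m := hyrR.trans hrm
    rw [abs_of_nonneg (hsepB x ⟨by linarith [hx.1], by linarith [hx.2]⟩),
      abs_of_nonneg (hsepB y ⟨by linarith, hymR⟩)]
    exact this
  have hy0y : (y0 : ℝ) < y := by
    by_contra! hc
    have := pm_B hsepB hs2 hy0m hy0p y hysR hc
    linarith
  have hy0s : (s.2 : ℝ) ≤ y0 := by exact_mod_cast hy0p.1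
  -- the vertical edge reaching row y
  obtain ⟨e, he1, he2⟩ := fin_cross (fun k => (π.vert k).2 < y)
    (by rw [h0]; simp only; linarith) (by
      have : (r : ℝ) ≤ (π.vert (Fin.last π.N)).2 := (RectPath.le_last hrect memd).2
      linarith)
  rw [not_lt] at he2
  have hev : (π.vert e.castSucc).1 = (π.vert e.succ).1 := by
    rcases hrect e with h | h
    · exact h.1
    · linarith [h.1]
  have memxy := RectPath.edge_v e hev y he1.le he2
  obtain ⟨x, w, hxw, hxp, -⟩ := hpm e.castSucc
  have memxw : ((x : ℝ), (w : ℝ)) ∈ π.image := hxw ▸ RectPath.vert_mem _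
  rw [hxw] at memxy he1
  simp only at memxy he1
  have hax : (a' : ℝ) ≤ x := RectPath.right_of_lt hrect mem0 memxy hy0y
  have hxc : (x : ℝ) ≤ c := RectPath.right_of_lt hrect memxw memc (by linarith)
  have hxb : x < b := by
    have : (x : ℝ) < b := by linarith
    exact_mod_cast this
  refine ⟨y, hys, hyB, fun k h1 h2 => hymin k ⟨h1, h2⟩, fun u hu hu' => ?_⟩
  rcases hgr x y memxy hxp hyp b hxb hbp
    (good x y hax (by linarith) (by linarith) hyB) with h | h
  · exact h ⟨⟨by simp only; linarith, hu'⟩, rfl⟩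
  · have := (RectPath.le_last hrect memd).1
    rw [h] at this
    simp only at this
    linarith

theorem no_overlap {π π' : RectPath} (hdisj : InteriorDisjoint π π') {u v y : ℝ} (huv : u < v)
    (h : ∀ x, u ≤ x → x ≤ v → (x, y) ∈ π.image)
    (h' : ∀ x, u ≤ x → x ≤ v → (x, y) ∈ π'.image) : False := by
  have hinf : (Icc u v).Infinite := Icc_infinite huv
  apply hinf
  have : Icc u v ⊆ {(π.vert 0).1, π.last.1, (π'.vert 0).1, π'.last.1} := by
    intro x hx
    rcases hdisj (x, y) ⟨h x hx.1 hx.2, h' x hx.1 hx.2⟩ with (h | h) | (h | h) <;>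
      simp [← h]
  exact (Set.toFinite _).subset this

theorem vertLines_spec {R B : ℝ → ℝ} {n m : ℕ} {δ : ℝ} {s : ℤ × ℤ} {π : RectPath}
    (hπ : IsPMMatching R B n m δ s π) {i : ℤ} (hi : i ∈ vertLines π) :
    PrefixMin R s.1 i ∧ ∃ y0 y1 : ℤ, y0 < y1 ∧ ((i : ℝ), (y0 : ℝ)) ∈ π.image ∧
      ((i : ℝ), (y1 : ℝ)) ∈ π.image := by
  obtain ⟨hrect, -, -, hpm⟩ := hπ
  obtain ⟨k, hk1, hk2⟩ := hi
  have hkup : (π.vert k.castSucc).2 < (π.vert k.succ).2 := by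
    rcases hrect k with h | h
    · exact h.2
    · exact absurd hk2 h.2.ne
  obtain ⟨a', y0, hv, hap, -⟩ := hpm k.castSucc
  obtain ⟨a'', y1, hv', -, -⟩ := hpm k.succ
  rw [hv] at hk1 hk2 hkup
  rw [hv'] at hk2 hkup
  simp only at hk1 hk2 hkup
  have ea : a' = i := by exact_mod_cast hk1
  subst ea
  refine ⟨hap, y0, y1, by exact_mod_cast hkup, hv ▸ RectPath.vert_mem _, ?_⟩
  rw [hk2]
  exact hv' ▸ RectPath.vert_mem _

theorem horizLines_spec {R B : ℝ → ℝ} {n m : ℕ} {δ : ℝ} {s : ℤ × ℤ} {π : RectPath}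
    (hπ : IsPMMatching R B n m δ s π) {j : ℤ} (hj : j ∈ horizLines π) :
    PrefixMin B s.2 j ∧ ∃ c d : ℤ, c < d ∧ PrefixMin R s.1 c ∧ PrefixMin R s.1 d ∧
      ((c : ℝ), (j : ℝ)) ∈ π.image ∧ ((d : ℝ), (j : ℝ)) ∈ π.image := by
  obtain ⟨hrect, -, -, hpm⟩ := hπ
  obtain ⟨k, hk1, hk2⟩ := hj
  have hkup : (π.vert k.castSucc).1 < (π.vert k.succ).1 := by
    rcases hrect k with h | h
    · exact absurd hk2 h.2.ne
    · exact h.2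
  obtain ⟨c, j1, hv, hcp, hjp⟩ := hpm k.castSucc
  obtain ⟨d, j2, hv', hdp, -⟩ := hpm k.succ
  rw [hv] at hk1 hk2 hkup
  rw [hv'] at hk2 hkup
  simp only at hk1 hk2 hkup
  have ea : j1 = j := by exact_mod_cast hk1
  subst ea
  refine ⟨hjp, c, d, by exact_mod_cast hkup, hcp, hdp, hv ▸ RectPath.vert_mem _, ?_⟩
  rw [hk2]
  exact hv' ▸ RectPath.vert_mem _

theorem core {n m : ℕ} {R B : ℝ → ℝ} (hR : IsPoly1D R n) (hB : IsPoly1D B m)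
    (hsepR : ∀ x ∈ Icc (1:ℝ) (n : ℝ), R x ≤ 0)
    (hsepB : ∀ y ∈ Icc (1:ℝ) (m : ℝ), 0 ≤ B y)
    {δ : ℝ} {s s' : ℤ × ℤ} {π π' : RectPath}
    (hπ : IsHorizGreedy R B n m δ s π) (hπ' : IsHorizGreedy R B n m δ s' π')
    (hdisj : InteriorDisjoint π π') (hss : s.2 ≤ s'.2)
    {i1 i2 j : ℤ} (hi : i1 < i2) (h1 : i1 ∈ vertLines π) (h1' : i1 ∈ vertLines π')
    (h2 : i2 ∈ vertLines π) (h2' : i2 ∈ vertLines π')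
    (hj : j ∈ horizLines π) (hj' : j ∈ horizLines π') : False := by
  have hrect := hπ.1.1
  have hrect' := hπ'.1.1
  have hfree := hπ.1.2.2.1
  have hfree' := hπ'.1.2.2.1
  obtain ⟨p1, u0, u1, hu, mu0, mu1⟩ := vertLines_spec hπ.1 h1
  obtain ⟨p2, v0, v1, hv, mv0, mv1⟩ := vertLines_spec hπ.1 h2
  obtain ⟨p2', w0, w1, hw, mw0, mw1⟩ := vertLines_spec hπ'.1 h2'
  obtain ⟨pj, c, d, hcd, pc, pd, mc, md⟩ := horizLines_spec hπ.1 hj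
  obtain ⟨pj', c', d', hcd', pc', pd', mc', md'⟩ := horizLines_spec hπ'.1 hj'
  have hs := hfree (RectPath.vert_mem 0)
  rw [hπ.1.2.1] at hs
  obtain ⟨⟨hs1, -⟩, ⟨hs2, -⟩, -⟩ := hs
  simp only at hs1 hs2
  have hi1 : (1 : ℝ) ≤ i1 := (hfree mu0).1.1
  have hi1Z : (1 : ℤ) ≤ i1 := by exact_mod_cast hi1
  have hi2n : (i2 : ℝ) ≤ n := (hfree mv0).1.2
  have hdn : (d : ℝ) ≤ n := (hfree md).1.2
  have hjm : (j : ℝ) ≤ m := (hfree md).2.1.2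
  have hiR : (i1 : ℝ) < i2 := by exact_mod_cast hi
  have hcdR : (c : ℝ) < d := by exact_mod_cast hcd
  have hs1i1 : (s.1 : ℝ) ≤ i1 := by exact_mod_cast p1.1
  obtain ⟨z, hz1, hz2, hz⟩ := exists_argmin hR hi1Z (by exact_mod_cast hi2n) hi
    (pm_R hsepR hs1 hi2n p2 i1 hs1i1 hiR.le)
  have hz2R : (z : ℝ) < i2 := by exact_mod_cast hz2
  obtain ⟨y, hy1, hy2, hy3, hy4⟩ := greedy_cross hB hsepB hπ h1 p2
    (RectPath.le_last hrect mv0).1 hz1 hz2 hz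
  obtain ⟨y', hy1', hy2', hy3', hy4'⟩ := greedy_cross hB hsepB hπ' h1' p2'
    (RectPath.le_last hrect' mw0).1 hz1 hz2 hz
  have hyy : y < y' := by
    refine lt_of_le_of_ne (hy3 y' (hss.trans hy1') hy2') ?_
    rintro rfl
    exact no_overlap hdisj hz2R hy4 hy4'
  have hys' : y < s'.2 := by
    by_contra! hc
    have := hy3' y hc hy2
    omega
  have hyj : y < j := hys'.trans_le pj'.1
  have hyjR : (y : ℝ) < j := by exact_mod_cast hyj
  have hci : (i2 : ℝ) ≤ c := RectPath.right_of_lt hrect (hy4 i2 hz2R.le le_rfl) mc hyjR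
  have hid : i2 < d := by
    have : (i2 : ℝ) < d := by linarith
    exact_mod_cast this
  have hidR : (i2 : ℝ) < d := by exact_mod_cast hid
  -- second column pair
  obtain ⟨x, hx1, hx2, hx⟩ := exists_argmin hR (hi1Z.trans hi.le) (by exact_mod_cast hdn) hid
    (pm_R hsepR hs1 hdn pd i2 (by linarith) hidR.le)
  have hx2R : (x : ℝ) < d := by exact_mod_cast hx2
  have hx1R : (i2 : ℝ) ≤ x := by exact_mod_cast hx1
  obtain ⟨r, hr1, hr2, hr3, hr4⟩ := greedy_cross hB hsepB hπ h2 pd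
    (RectPath.le_last hrect md).1 hx1 hx2 hx
  have hrj : r = j := by
    rcases lt_trichotomy r j with h | h | h
    · have := RectPath.right_of_lt hrect (hr4 d hx2R.le le_rfl) mc (by exact_mod_cast h)
      linarith
    · exact h
    · have := RectPath.up_of_lt hrect (hr4 x le_rfl hx2R.le) md hx2R
      have : r ≤ j := by exact_mod_cast this
      omega
  subst hrj
  have pd2 : PrefixMin R s'.1 d := by
    refine ⟨p2'.1.trans hid.le, fun t ht => ?_⟩
    rcases le_total t i2 with h | h
    · exact (pd.2 i2 ⟨by linarith, hidR.le⟩).trans (p2'.2 t ⟨ht.1, h⟩)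
    · exact pd.2 t ⟨by linarith, ht.2⟩
  have hrs : (1:ℝ) ≤ r := (hfree md).2.1.1
  have good : ∀ (t : ℤ), (i2 : ℝ) ≤ t →
      Icc (t : ℝ) (d : ℝ) ×ˢ ({(r : ℝ)} : Set ℝ) ⊆ freeSpace R B n m δ := by
    rintro t ht ⟨u, v⟩ ⟨⟨hu1, hu2⟩, hv⟩
    simp only [mem_singleton_iff] at hv hu1 hu2
    subst hv
    refine ⟨⟨by simp only; linarith, by simp only; linarith⟩, ⟨hrs, hjm⟩, ?_⟩
    have := hx u (by linarith) hu2
    simp only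
    linarith
  -- π' reaches column d
  have reach : (d : ℝ) ≤ π'.last.1 := by
    have hBr : B r ≤ B y := pm_B hsepB hs2 hjm pj y (by exact_mod_cast hy1) hyjR.le
    have hy'r : y' ≤ r := hy3' r pj'.1 (hBr.trans hy2)
    have my' := hy4' i2 hz2R.le le_rfl
    have fin : ∀ t : ℤ, (i2 : ℝ) ≤ t → PrefixMin R s'.1 t → ((t : ℝ), (r : ℝ)) ∈ π'.image →
        π'.last ≠ ((t : ℝ), (r : ℝ)) → (d : ℝ) ≤ π'.last.1 := by
      intro t ht pt mt hl
      rcases le_or_gt d t with h | h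
      · have h' : (d : ℝ) ≤ t := by exact_mod_cast h
        exact h'.trans (RectPath.le_last hrect' mt).1
      · rcases hπ'.2 t r mt pt pj' d h pd2 (good t ht) with h' | h'
        · have hR : (t : ℝ) ≤ d := by exact_mod_cast h.le
          have : ((d : ℝ), (r : ℝ)) ∈ π'.image := h' ⟨⟨hR, le_rfl⟩, rfl⟩
          exact (RectPath.le_last hrect' this).1
        · exact absurd h' hl
    rcases hy'r.eq_or_lt with h | h
    · subst h
      refine fin i2 le_rfl p2' my' fun hl => ?_
      have a1 := RectPath.up_of_lt hrect' (hy4' z le_rfl hz2R.le) mw0 hz2R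
      have a2 := (RectPath.le_last hrect' mw1).2
      rw [hl] at a2
      simp only at a2
      have : (w0 : ℝ) < w1 := by exact_mod_cast hw
      linarith
    · refine fin c' (RectPath.right_of_lt hrect' my' mc' (by exact_mod_cast h)) pc' mc'
        fun hl => ?_
      have a2 := (RectPath.le_last hrect' md').1
      rw [hl] at a2
      simp only at a2
      have : (c' : ℝ) < d' := by exact_mod_cast hcd'
      linarith
  obtain ⟨q, hq1, hq2, hq3, hq4⟩ := greedy_cross hB hsepB hπ' h2' pd2 reach hx1 hx2 hx
  have hqr : q = r := le_antisymm (hq3 r pj'.1 hr2) (hr3 q (hss.trans hq1) hq2)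
  subst hqr
  exact no_overlap hdisj hx2R hr4 hq4

theorem core' {n m : ℕ} {R B : ℝ → ℝ} (hR : IsPoly1D R n) (hB : IsPoly1D B m)
    (hsepR : ∀ x ∈ Icc (1:ℝ) (n : ℝ), R x ≤ 0)
    (hsepB : ∀ y ∈ Icc (1:ℝ) (m : ℝ), 0 ≤ B y)
    {δ : ℝ} {s s' : ℤ × ℤ} {π π' : RectPath}
    (hπ : IsHorizGreedy R B n m δ s π) (hπ' : IsHorizGreedy R B n m δ s' π')
    (hdisj : InteriorDisjoint π π')
    {i1 i2 j : ℤ} (hi : i1 < i2) (h1 : i1 ∈ vertLines π ∩ vertLines π')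
    (h2 : i2 ∈ vertLines π ∩ vertLines π')
    (hj : j ∈ horizLines π ∩ horizLines π') : False := by
  rcases le_total s.2 s'.2 with h | h
  · exact core hR hB hsepR hsepB hπ hπ' hdisj h hi h1.1 h1.2 h2.1 h2.2 hj.1 hj.2
  · exact core hR hB hsepR hsepB hπ' hπ (fun p hp => (hdisj p hp.symm).symm) h hi
      h1.2 h1.1 h2.2 h2.1 hj.2 hj.1

/-- Two interior-disjoint horizontal-greedy `δ`-matchings share
at most one vertical line or at most one horizontal line:
`|C(π) ∩ C(π')| ≤ 1` or `|R(π) ∩ R(π')| ≤ 1`. -/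
theorem aligned_turns
    (n m : ℕ) (hn : 1 ≤ n) (hm : 1 ≤ m)
    (R B : ℝ → ℝ) (hR : IsPoly1D R n) (hB : IsPoly1D B m)
    (hsepR : ∀ x ∈ Icc (1:ℝ) (n : ℝ), R x ≤ 0)
    (hsepB : ∀ y ∈ Icc (1:ℝ) (m : ℝ), 0 ≤ B y)
    (hgpR : GeneralPosition R n) (hgpB : GeneralPosition B m)
    (δ : ℝ) (hδ : 0 ≤ δ)
    (s s' : ℤ × ℤ) (π π' : RectPath)
    (hπ : IsHorizGreedy R B n m δ s π) (hπ' : IsHorizGreedy R B n m δ s' π')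
    (hdisj : InteriorDisjoint π π') :
    (vertLines π ∩ vertLines π').Subsingleton ∨
    (horizLines π ∩ horizLines π').Subsingleton := by
  by_contra! hc
  obtain ⟨hV, hH⟩ := hc
  obtain ⟨a, ha, b, hb, hab⟩ := hV
  obtain ⟨j, hj, -⟩ := hH
  rcases lt_or_gt_of_ne hab with h | h
  · exact core' hR hB hsepR hsepB hπ hπ' hdisj h ha hb hj
  · exact core' hR hB hsepR hsepB hπ hπ' hdisj h hb ha hj
end
end

section
/- For any matching (f, g) between R and B there exist a parameter t ∈ [0,1] and a nonzero vector u ∈ ℝ² such that the line through R(f(t)) with normal u and the parallel line through B(g(t)) are tangent to P with P in the area between them; that is, for every p ∈ P one has ⟨u, B(g(t))⟩ ≤ ⟨u, p⟩ ≤ ⟨u, R(f(t))⟩. -/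
open Set
open scoped RealInnerProductSpace

noncomputable section

abbrev E2 := EuclideanSpace ℝ (Fin 2)

/-- A reparameterization: a nondecreasing surjection of `[0,1]` onto `[0,1]`. -/
def IsRepar (f : ℝ → ℝ) : Prop :=
  MonotoneOn f (Icc 0 1) ∧ MapsTo f (Icc 0 1) (Icc 0 1) ∧ SurjOn f (Icc 0 1) (Icc 0 1)

/-- `u` is squeezed between its values at `y` and `x` on `S`. -/
def Good (x y : E2) (S : Set E2) (u : E2) : Prop :=
  ∀ p ∈ S, ⟪u, y⟫ ≤ ⟪u, p⟫ ∧ ⟪u, p⟫ ≤ ⟪u, x⟫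

/-- The combined cover / intersection property for two caps. -/
def Caps (x y : E2) (A C : Set E2) : Prop :=
  ((∃ u, u ≠ 0 ∧ Good x y A u) ∨ (∃ u, u ≠ 0 ∧ Good x y C u)) ∧
  ((∃ u, u ≠ 0 ∧ Good x y A u) → (∃ u, u ≠ 0 ∧ Good x y C u) →
    ∃ u, u ≠ 0 ∧ Good x y (A ∪ C) u)

lemma Caps.symm {x y : E2} {A C : Set E2} (h : Caps x y A C) : Caps x y C A := by
  obtain ⟨h1, h2⟩ := h
  refine ⟨h1.symm, fun a b => ?_⟩
  rw [union_comm]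
  exact h2 b a

/-- rotation by a right angle -/
def rot (d : E2) : E2 := !₂[-(d 1), d 0]

lemma inner_coord (u v : E2) : ⟪u, v⟫ = u 0 * v 0 + u 1 * v 1 := by
  simp [PiLp.inner_apply, Fin.sum_univ_two, mul_comm]

lemma rot_inner (d : E2) : ⟪rot d, d⟫ = 0 := by
  rw [inner_coord]; simp [rot]; ring

lemma normsq_pos {d : E2} (hd : d ≠ 0) : 0 < d 0 * d 0 + d 1 * d 1 := by
  rw [← inner_coord]
  exact real_inner_self_pos.mpr hd

lemma rot_ne {d : E2} (hd : d ≠ 0) : rot d ≠ 0 := by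
  intro h
  have := normsq_pos hd
  have h0 := congrArg (fun v : E2 => v 0) h
  have h1 := congrArg (fun v : E2 => v 1) h
  simp [rot] at h0 h1
  simp [h0, h1] at this

lemma perp_d {d v : E2} (hd : d ≠ 0) (h : ⟪v, d⟫ = 0) : ∃ s : ℝ, v = s • rot d := by
  have hp := (normsq_pos hd).ne'
  have hp1 : d 0 ^ 2 + d 1 ^ 2 ≠ 0 := by rwa [pow_two, pow_two]
  have hp2 : d 1 ^ 2 + d 0 ^ 2 ≠ 0 := by rwa [add_comm]
  rw [inner_coord] at h
  refine ⟨(v 1 * d 0 - v 0 * d 1) / (d 0 * d 0 + d 1 * d 1), ?_⟩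
  ext i
  fin_cases i
  · simp [rot]; field_simp; linear_combination (d 0) * h
  · simp [rot]; field_simp; linear_combination (d 1) * h

lemma perp_rot {d v : E2} (hd : d ≠ 0) (h : ⟪rot d, v⟫ = 0) : ∃ s : ℝ, v = s • d := by
  have hp := (normsq_pos hd).ne'
  have hp1 : d 0 ^ 2 + d 1 ^ 2 ≠ 0 := by rwa [pow_two, pow_two]
  have hp2 : d 1 ^ 2 + d 0 ^ 2 ≠ 0 := by rwa [add_comm]
  rw [inner_coord] at h
  simp [rot] at h
  refine ⟨(v 0 * d 0 + v 1 * d 1) / (d 0 * d 0 + d 1 * d 1), ?_⟩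
  ext i
  fin_cases i
  · simp; field_simp; linear_combination (-d 1) * h
  · simp; field_simp; linear_combination (d 0) * h

/-- The algebraic heart in the transversal case. -/
lemma caps_alg {x y : E2} {A C : Set E2} {w n : E2} {s : ℝ} (hs : 0 ≤ s)
    (hw : ∀ p ∈ A ∪ C, ⟪w, p⟫ ≤ ⟪w, x⟫)
    (hw' : ∀ p ∈ A ∪ C, ⟪w + s • n, y⟫ ≤ ⟪w + s • n, p⟫)
    (hxy : x ≠ y) (hn : n = rot (x - y) ∨ n = - rot (x - y))
    (hw1 : ⟪w, x - y⟫ = 1)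
    (hA : ∀ p ∈ A, ⟪n, p⟫ ≤ ⟪n, x⟫) (hC : ∀ p ∈ C, ⟪n, x⟫ ≤ ⟪n, p⟫)
    (hxC : x ∈ C) (hyC : y ∈ C)
    (hne : ∃ p ∈ A ∪ C, ⟪n, x⟫ < ⟪n, p⟫) : Caps x y A C := by
  have hd : x - y ≠ 0 := sub_ne_zero.mpr hxy
  have hnd : ⟪n, x - y⟫ = 0 := by
    rcases hn with rfl | rfl
    · exact rot_inner _
    · rw [inner_neg_left, rot_inner, neg_zero]
  have hperp : ∀ v : E2, ⟪v, x - y⟫ = 0 → ∃ s : ℝ, v = s • n := by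
    intro v hv
    obtain ⟨c, hc⟩ := perp_d hd hv
    rcases hn with rfl | rfl
    · exact ⟨c, hc⟩
    · exact ⟨-c, by simpa using hc⟩
  have hnxy : ⟪n, x⟫ = ⟪n, y⟫ := by rw [inner_sub_right] at hnd; linarith
  have hwxy : ⟪w, x⟫ = ⟪w, y⟫ + 1 := by rw [inner_sub_right] at hw1; linarith
  have hnz : ∀ σ : ℝ, w + σ • n ≠ 0 := by
    intro σ h
    have : ⟪w + σ • n, x - y⟫ = 1 := by
      rw [inner_add_left, real_inner_smul_left, hnd, hw1]; simp
    rw [h] at this; simp at this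
  have hex : ∀ (σ : ℝ) (p : E2), ⟪w + σ • n, p⟫ = ⟪w, p⟫ + σ * ⟪n, p⟫ := by
    intro σ p; rw [inner_add_left, real_inner_smul_left]
  simp only [hex] at hw'
  refine ⟨Or.inl ⟨w + s • n, hnz s, ?_⟩, ?_⟩
  · intro p hp
    simp only [hex]
    refine ⟨hw' p (Or.inl hp), ?_⟩
    have := hw p (Or.inl hp)
    nlinarith [hA p hp]
  · rintro - ⟨u, hu0, hu⟩
    obtain ⟨q, hq, hnq⟩ := hne
    have hqC : q ∈ C := by
      rcases hq with hq | hq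
      · exact absurd (hA q hq) (not_le.mpr hnq)
      · exact hq
    have hc0 : 0 ≤ ⟪u, x - y⟫ := by
      rw [inner_sub_right]; linarith [(hu x hxC).1]
    have hc : 0 < ⟪u, x - y⟫ := by
      rcases hc0.lt_or_eq with h | h
      · exact h
      · exfalso
        obtain ⟨c, rfl⟩ := hperp u h.symm
        have hc' : c ≠ 0 := by rintro rfl; simp at hu0
        have h3 := hu q hqC
        simp only [real_inner_smul_left] at h3
        rw [← hnxy] at h3
        have h4 : c * (⟪n, q⟫ - ⟪n, x⟫) = 0 := by linarith [h3.1, h3.2]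
        rcases mul_eq_zero.mp h4 with h5 | h5
        · exact hc' h5
        · linarith
    set c := ⟪u, x - y⟫ with hcdef
    obtain ⟨s2, hs2⟩ := hperp (c⁻¹ • u - w) (by
      rw [inner_sub_left, real_inner_smul_left, hw1, ← hcdef, inv_mul_cancel₀ hc.ne']; simp)
    have hs2' : c⁻¹ • u = w + s2 • n := by rw [← hs2]; abel
    have hu2 : ∀ p ∈ C, ⟪w, y⟫ + s2 * ⟪n, y⟫ ≤ ⟪w, p⟫ + s2 * ⟪n, p⟫ ∧
        ⟪w, p⟫ + s2 * ⟪n, p⟫ ≤ ⟪w, x⟫ + s2 * ⟪n, x⟫ := by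
      intro p hp
      simp only [← hex, ← hs2', real_inner_smul_left]
      have hci : 0 ≤ c⁻¹ := inv_nonneg.mpr hc.le
      exact ⟨mul_le_mul_of_nonneg_left (hu p hp).1 hci,
        mul_le_mul_of_nonneg_left (hu p hp).2 hci⟩
    have key : ∀ σ : ℝ, 0 ≤ σ → σ ≤ s → (σ ≤ 0 ∨ σ ≤ s2) → (s ≤ σ ∨ s2 ≤ σ) →
        Good x y (A ∪ C) (w + σ • n) := by
      intro σ h1 h2 h3 h4 p hp
      simp only [hex]
      have a1 := hw p hp
      have a2 := hw' p hp
      rcases hp with hp | hp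
      · have a3 := hA p hp
        constructor
        · nlinarith
        · nlinarith
      · have a3 := hC p hp
        have a4 := hu2 p hp
        constructor
        · rcases h4 with h4 | h4 <;> nlinarith [a4.1]
        · rcases h3 with h3 | h3 <;> nlinarith [a4.2]
    rcases le_total s2 0 with h | h
    · exact ⟨w + (0:ℝ) • n, hnz _, key 0 le_rfl hs (Or.inl le_rfl) (Or.inr h)⟩
    · rcases le_total s2 s with h' | h'
      · exact ⟨w + s2 • n, hnz _, key s2 h h' (Or.inr le_rfl) (Or.inr le_rfl)⟩
      · exact ⟨w + s • n, hnz _, key s hs le_rfl (Or.inr h') (Or.inl le_rfl)⟩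

/-- Simple arcs. -/
def IsArc (A : Set E2) (x y : E2) : Prop :=
  ∃ (c d : ℝ) (γ : ℝ → E2), c ≤ d ∧ ContinuousOn γ (Icc c d) ∧ InjOn γ (Icc c d) ∧
    γ '' Icc c d = A ∧ γ c = x ∧ γ d = y

lemma IsArc.isClosed {A : Set E2} {x y : E2} (h : IsArc A x y) : IsClosed A := by
  obtain ⟨c, d, γ, hcd, hc, hi, rfl, -, -⟩ := h
  exact (isCompact_Icc.image_of_continuousOn hc).isClosed

lemma IsArc.preconn {A : Set E2} {x y : E2} (h : IsArc A x y) :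
    IsPreconnected (A \ {x, y}) := by
  obtain ⟨c, d, γ, hcd, hc, hi, rfl, rfl, rfl⟩ := h
  have : γ '' Icc c d \ {γ c, γ d} = γ '' Ioo c d := by
    ext p
    constructor
    · rintro ⟨⟨t, ht, rfl⟩, h2⟩
      simp only [mem_insert_iff, mem_singleton_iff, not_or] at h2
      refine ⟨t, ⟨lt_of_le_of_ne ht.1 ?_, lt_of_le_of_ne ht.2 ?_⟩, rfl⟩
      · rintro rfl; exact h2.1 rfl
      · rintro rfl; exact h2.2 rfl
    · rintro ⟨t, ht, rfl⟩
      have ht' := Ioo_subset_Icc_self ht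
      refine ⟨⟨t, ht', rfl⟩, ?_⟩
      simp only [mem_insert_iff, mem_singleton_iff, not_or]
      exact ⟨fun h => ht.1.ne' (hi ht' (left_mem_Icc.mpr hcd) h),
        fun h => ht.2.ne (hi ht' (right_mem_Icc.mpr hcd) h)⟩
  rw [this]
  exact isPreconnected_Ioo.image _ (hc.mono Ioo_subset_Icc_self)

lemma IsArc.subset_of {A S : Set E2} {x y : E2} (h : IsArc A x y) (hS : IsPreconnected S)
    (hx : x ∈ S) (hy : y ∈ S) (hSA : S ⊆ A) : A ⊆ S := by
  obtain ⟨c, d, γ, hcd, hc, hi, rfl, rfl, rfl⟩ := h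
  have hcont : Continuous ((Icc c d).domRestrict γ) := continuousOn_iff_continuous_domRestrict.mp hc
  have hcm : IsClosedMap ((Icc c d).domRestrict γ) := hcont.isClosedMap
  have hinj : Function.Injective ((Icc c d).domRestrict γ) := injOn_iff_injective.mp hi
  have hpre := hS.preimage_of_isClosedMap hinj hcm (by rwa [range_domRestrict])
  have h2 := hpre.image _ continuous_subtype_val.continuousOn
  have h3 := h2.Icc_subset (a := c) (b := d)
    ⟨⟨c, left_mem_Icc.mpr hcd⟩, hx, rfl⟩ ⟨⟨d, right_mem_Icc.mpr hcd⟩, hy, rfl⟩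
  rintro _ ⟨t, ht, rfl⟩
  obtain ⟨⟨t', ht'⟩, h4, h5⟩ := h3 ht
  simp only at h5
  subst h5
  exact h4

/-- concatenating two arcs with the same starting point -/
lemma isArc_join (R B : ℝ → E2) (hR : Continuous R) (hB : Continuous B) (r b : ℝ)
    (hr : 0 ≤ r) (hb : 0 ≤ b) (hRi : InjOn R (Icc 0 r)) (hBi : InjOn B (Icc 0 b))
    (h0 : R 0 = B 0)
    (hint : ∀ s ∈ Icc 0 r, ∀ t ∈ Icc 0 b, R s = B t → R s = R 0) :
    IsArc (R '' Icc 0 r ∪ B '' Icc 0 b) (R r) (B b) := by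
  classical
  have hint' : ∀ s ∈ Icc 0 r, ∀ t ∈ Icc 0 b, R s = B t → s = 0 ∧ t = 0 := by
    intro s hs t ht h
    have h1 := hint s hs t ht h
    refine ⟨hRi hs ⟨le_rfl, hr⟩ h1, hBi ht ⟨le_rfl, hb⟩ ?_⟩
    rw [← h, h1, h0]
  refine ⟨-r, b, fun s => if s ≤ 0 then R (-s) else B s, by linarith, ?_, ?_, ?_, ?_, ?_⟩
  · apply Continuous.continuousOn
    refine Continuous.if_le (by fun_prop) hB continuous_id continuous_const ?_
    rintro s hs
    have hs' : s = 0 := hs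
    subst hs'
    simpa using h0
  · intro s hs t ht hst
    simp only at hst
    split_ifs at hst with h1 h2 h2
    · have := hRi (x₁ := -s) (x₂ := -t) ⟨by linarith, by linarith [hs.1]⟩ ⟨by linarith, by linarith [ht.1]⟩ hst
      linarith
    · have := hint' (-s) ⟨by linarith, by linarith [hs.1]⟩ t ⟨by linarith, ht.2⟩ hst
      linarith
    · have := hint' (-t) ⟨by linarith, by linarith [ht.1]⟩ s ⟨by linarith, hs.2⟩ hst.symm
      linarith
    · exact hBi ⟨by linarith, hs.2⟩ ⟨by linarith, ht.2⟩ hst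
  · ext p
    constructor
    · rintro ⟨s, hs, rfl⟩
      simp only
      split_ifs with h
      · exact Or.inl ⟨-s, ⟨by linarith, by linarith [hs.1]⟩, rfl⟩
      · exact Or.inr ⟨s, ⟨by linarith, hs.2⟩, rfl⟩
    · rintro (⟨s, hs, rfl⟩ | ⟨s, hs, rfl⟩)
      · refine ⟨-s, ⟨by linarith [hs.2], by linarith [hs.1]⟩, ?_⟩
        simp [hs.1]
      · refine ⟨s, ⟨by linarith [hs.1], hs.2⟩, ?_⟩
        rcases hs.1.eq_or_lt with h | h
        · subst h; simp [h0]
        · simp [not_le.mpr h]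
  · simp [hr]
  · rcases hb.eq_or_lt with h | h
    · subst h; simp [h0]
    · simp [not_le.mpr h]

/-- a linear functional bounded on the frontier is bounded on `P` -/
lemma le_of_frontier {P : Set E2} (hPc : IsCompact P) {u : E2} (hu : u ≠ 0) {m : ℝ}
    (h : ∀ p ∈ frontier P, ⟪u, p⟫ ≤ m) : ∀ p ∈ P, ⟪u, p⟫ ≤ m := by
  intro p hp
  obtain ⟨q, hq, hmax⟩ := hPc.exists_isMaxOn ⟨p, hp⟩
    (f := fun z => ⟪u, z⟫) (by fun_prop)
  have hqf : q ∈ frontier P := by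
    rw [hPc.isClosed.frontier_eq]
    refine ⟨hq, fun hqi => ?_⟩
    have hcont : Continuous (fun s : ℝ => q + s • u) := by fun_prop
    have hn : ∀ᶠ s : ℝ in nhds 0, q + s • u ∈ P := by
      apply hcont.continuousAt.eventually
      simpa using mem_interior_iff_mem_nhds.mp hqi
    have hn2 : ∀ᶠ s : ℝ in nhdsWithin 0 (Ioi 0), q + s • u ∈ P := hn.filter_mono nhdsWithin_le_nhds
    obtain ⟨s, hs, hs0⟩ := (hn2.and self_mem_nhdsWithin).exists
    have h1 : ⟪u, q + s • u⟫ ≤ ⟪u, q⟫ := hmax hs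
    rw [inner_add_right, real_inner_smul_right] at h1
    have := real_inner_self_pos.mpr hu
    have h2 : 0 < s * ⟪u, u⟫ := mul_pos hs0 this
    linarith
  exact le_trans (hmax hp) (h q hqf)

lemma exists_support {P : Set E2} (hPc : IsCompact P) (hPconv : Convex ℝ P)
    (hne : (interior P).Nonempty) {x : E2} (hx : x ∈ frontier P) :
    ∃ w : E2, w ≠ 0 ∧ ∀ p ∈ P, ⟪w, p⟫ ≤ ⟪w, x⟫ := by
  obtain ⟨φ, hφ⟩ := geometric_hahn_banach_open_point hPconv.interior isOpen_interior hx.2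
  obtain ⟨z, hz⟩ := hne
  set w := (InnerProductSpace.toDual ℝ E2).symm φ with hw
  have hwφ : ∀ p, ⟪w, p⟫ = φ p := fun p => by
    rw [hw, InnerProductSpace.toDual_symm_apply]
  refine ⟨w, ?_, ?_⟩
  · intro h
    have := hφ z hz
    rw [← hwφ, ← hwφ, h] at this
    simp at this
  · intro p hp
    have hcl : p ∈ closure (interior P) := by
      rw [hPconv.closure_interior_eq_closure_of_nonempty_interior ⟨z, hz⟩]
      exact subset_closure hp
    rw [hwφ, hwφ]
    have hclosed : IsClosed {p | φ p ≤ φ x} := isClosed_le φ.continuous continuous_const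
    exact closure_minimal (fun q hq => (hφ q hq).le) hclosed hcl

lemma exists_const_dir {P : Set E2} (hPconv : Convex ℝ P)
    (hne : ¬ (interior P).Nonempty) {x : E2} (hx : x ∈ P) :
    ∃ w : E2, w ≠ 0 ∧ ∀ p ∈ P, ⟪w, p⟫ = ⟪w, x⟫ := by
  rw [hPconv.interior_nonempty_iff_affineSpan_eq_top] at hne
  have hx' : x ∈ affineSpan ℝ P := subset_affineSpan ℝ P hx
  have hdir : (affineSpan ℝ P).direction ≠ ⊤ := by
    intro h
    exact hne ((AffineSubspace.direction_eq_top_iff_of_nonempty ⟨x, hx'⟩).mp h)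
  have hbot : ((affineSpan ℝ P).direction)ᗮ ≠ ⊥ := by
    intro h
    exact hdir ((Submodule.orthogonal_eq_bot_iff).mp h)
  obtain ⟨w, hw, hw0⟩ := Submodule.exists_mem_ne_zero_of_ne_bot hbot
  refine ⟨w, hw0, fun p hp => ?_⟩
  have h1 : p - x ∈ (affineSpan ℝ P).direction :=
    AffineSubspace.vsub_mem_direction (subset_affineSpan ℝ P hp) hx'
  have h2 := (Submodule.mem_orthogonal' _ _).mp hw _ h1
  rw [inner_sub_right] at h2
  linarith

lemma side_of_preconn {S : Set E2} (hS : IsPreconnected S) {n : E2} {m : ℝ}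
    (h : ∀ p ∈ S, ⟪n, p⟫ ≠ m) : (∀ p ∈ S, ⟪n, p⟫ ≤ m) ∨ (∀ p ∈ S, m ≤ ⟪n, p⟫) := by
  by_contra hcon
  push Not at hcon
  obtain ⟨⟨p, hp, hp1⟩, ⟨q, hq, hq1⟩⟩ := hcon
  obtain ⟨z, hz, hzm⟩ := hS.intermediate_value hq hp (f := fun z => ⟪n, z⟫) (by fun_prop)
    (show m ∈ Icc _ _ from ⟨hq1.le, hp1.le⟩)
  exact h z hz hzm

/-- The edge case. -/
lemma caps_edge {x y : E2} {A C : Set E2} {w : E2} (hw0 : w ≠ 0) (hwxy : ⟪w, x⟫ = ⟪w, y⟫)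
    (hxC : x ∈ C) (hyC : y ∈ C) (hA : A ⊆ segment ℝ x y) : Caps x y A C := by
  refine ⟨Or.inl ⟨w, hw0, ?_⟩, ?_⟩
  · intro p hp
    obtain ⟨a, b, ha, hb, hab, rfl⟩ := hA hp
    rw [inner_add_right, real_inner_smul_right, real_inner_smul_right, hwxy, ← add_mul, hab]
    simp
  · rintro - ⟨u, hu0, hu⟩
    refine ⟨u, hu0, ?_⟩
    rintro p (hp | hp)
    · obtain ⟨a, b, ha, hb, hab, rfl⟩ := hA hp
      rw [inner_add_right, real_inner_smul_right, real_inner_smul_right]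
      have h1 := (hu x hxC).1
      have : a = 1 - b := by linarith
      subst this
      constructor <;> nlinarith
    · exact hu p hp

lemma caps_main {P : Set E2} (hPc : IsCompact P) (hPconv : Convex ℝ P)
    (hne : (interior P).Nonempty) {x y : E2} {A C : Set E2} (hxy : x ≠ y)
    (hA : IsArc A x y) (hC : IsArc C x y) (hAC : A ∪ C = frontier P)
    (hi : A ∩ C ⊆ {x, y}) (hxA : x ∈ A) (hyA : y ∈ A) (hxC : x ∈ C) (hyC : y ∈ C) :
    Caps x y A C := by
  have hd : x - y ≠ 0 := sub_ne_zero.mpr hxy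
  have hfP : frontier P ⊆ P := hPc.isClosed.frontier_subset
  have hxf : x ∈ frontier P := hAC ▸ Or.inl hxA
  have hyf : y ∈ frontier P := hAC ▸ Or.inl hyA
  have hxP := hfP hxf
  have hyP := hfP hyf
  by_cases hedge : ∃ w : E2, w ≠ 0 ∧ (∀ p ∈ P, ⟪w, p⟫ ≤ ⟪w, x⟫) ∧ ⟪w, x⟫ = ⟪w, y⟫
  · obtain ⟨w, hw0, hw, hwxy⟩ := hedge
    have hseg : segment ℝ x y ⊆ frontier P := by
      intro p hp
      rw [hPc.isClosed.frontier_eq]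
      refine ⟨hPconv.segment_subset hxP hyP hp, fun hpi => ?_⟩
      have hpw : ⟪w, p⟫ = ⟪w, x⟫ := by
        obtain ⟨a, b, ha, hb, hab, rfl⟩ := hp
        rw [inner_add_right, real_inner_smul_right, real_inner_smul_right, ← hwxy, ← add_mul, hab]
        simp
      have hcont : Continuous (fun s : ℝ => p + s • w) := by fun_prop
      have hn : ∀ᶠ s : ℝ in nhds 0, p + s • w ∈ P := by
        apply hcont.continuousAt.eventually
        simpa using mem_interior_iff_mem_nhds.mp hpi
      have hn2 : ∀ᶠ s : ℝ in nhdsWithin 0 (Ioi 0), p + s • w ∈ P :=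
        hn.filter_mono nhdsWithin_le_nhds
      obtain ⟨s, hs, hs0⟩ := (hn2.and self_mem_nhdsWithin).exists
      have h1 := hw _ hs
      rw [inner_add_right, real_inner_smul_right, hpw] at h1
      have h2 : 0 < s * ⟪w, w⟫ := mul_pos hs0 (real_inner_self_pos.mpr hw0)
      linarith
    have hopen : IsPreconnected (openSegment ℝ x y) := (convex_openSegment x y).isPreconnected
    have hsub := isPreconnected_iff_subset_of_disjoint_closed.mp hopen A C hA.isClosed hC.isClosed
      (by rw [hAC]; exact (openSegment_subset_segment ℝ x y).trans hseg)
      (by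
        rw [eq_empty_iff_forall_notMem]
        rintro p ⟨hp, hpAC⟩
        rcases hi hpAC with h | h
        · subst h; exact hxy (left_mem_openSegment_iff.mp hp)
        · rw [mem_singleton_iff] at h
          subst h; exact hxy (right_mem_openSegment_iff.mp hp))
    have hcl : ∀ S : Set E2, IsArc S x y → openSegment ℝ x y ⊆ S → S ⊆ segment ℝ x y := by
      intro S hS h
      refine hS.subset_of (convex_segment x y).isPreconnected (left_mem_segment ℝ x y)
        (right_mem_segment ℝ x y) ?_
      exact segment_subset_closure_openSegment.trans (closure_minimal h hS.isClosed)
    rcases hsub with h | h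
    · exact caps_edge hw0 hwxy hxC hyC (hcl A hA h)
    · exact (caps_edge hw0 hwxy hxA hyA (hcl C hC h)).symm
  · push Not at hedge
    obtain ⟨w, hw0, hw⟩ := exists_support hPc hPconv hne hxf
    obtain ⟨v, hv0, hv⟩ := exists_support hPc hPconv hne hyf
    have hwc : 0 < ⟪w, x - y⟫ := by
      rw [inner_sub_right]
      exact sub_pos.mpr (lt_of_le_of_ne (hw y hyP) (fun h => hedge w hw0 hw h.symm))
    have hvc : 0 < ⟪v, y - x⟫ := by
      rw [inner_sub_right]
      refine sub_pos.mpr (lt_of_le_of_ne (hv x hxP) (fun h => hedge v hv0 ?_ h))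
      rw [h]; exact hv
    set n := rot (x - y) with hn
    have hn0 : n ≠ 0 := rot_ne hd
    have hnxy : ⟪n, x⟫ = ⟪n, y⟫ := by
      have := rot_inner (x - y)
      rw [inner_sub_right] at this; linarith
    -- the line meets the frontier in `x, y` only
    have hline : ∀ p ∈ frontier P, ⟪n, p⟫ = ⟪n, x⟫ → p = x ∨ p = y := by
      intro p hp hnp
      obtain ⟨τ, hτ⟩ := perp_rot hd (v := p - x) (by rw [inner_sub_right, ← hn]; linarith)
      have hp' : p = x + τ • (x - y) := by rw [← hτ]; abel
      have hpP := hfP hp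
      have h1 : τ ≤ 0 := by
        have := hw p hpP
        rw [hp', inner_add_right, real_inner_smul_right] at this
        by_contra hcon
        push Not at hcon
        nlinarith [mul_pos hcon hwc]
      have h2 : -1 ≤ τ := by
        have := hv p hpP
        rw [hp', inner_add_right, real_inner_smul_right] at this
        rw [inner_sub_right] at this hvc
        by_contra hcon
        push Not at hcon
        nlinarith
      obtain ⟨q, hq0, hq⟩ := exists_support hPc hPconv hne hp
      have a1 := hq x hxP
      have a2 := hq y hyP
      rw [hp', inner_add_right, real_inner_smul_right, inner_sub_right] at a1 a2
      by_cases e1 : τ = 0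
      · left; rw [hp', e1]; simp
      by_cases e2 : τ = -1
      · right; rw [hp', e2]; simp
      exfalso
      have h1' : τ < 0 := lt_of_le_of_ne h1 e1
      have h2' : -1 < τ := lt_of_le_of_ne h2 (Ne.symm e2)
      have b1 : ⟪q, x⟫ - ⟪q, y⟫ ≤ 0 := by
        by_contra hcon; push Not at hcon; nlinarith
      have b2 : 0 ≤ ⟪q, x⟫ - ⟪q, y⟫ := by
        by_contra hcon; push Not at hcon; nlinarith
      have b3 : ⟪q, x⟫ = ⟪q, y⟫ := by linarith
      refine hedge q hq0 ?_ b3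
      intro z hz
      have := hq z hz
      rw [hp', inner_add_right, real_inner_smul_right, inner_sub_right, b3] at this
      rw [b3]; linarith
    have hside : ∀ S : Set E2, IsArc S x y → S ⊆ frontier P →
        (∀ p ∈ S, ⟪n, p⟫ ≤ ⟪n, x⟫) ∨ (∀ p ∈ S, ⟪n, x⟫ ≤ ⟪n, p⟫) := by
      intro S hS hSf
      have h := side_of_preconn hS.preconn (n := n) (m := ⟪n, x⟫) (by
        rintro p ⟨hp, hp2⟩ h
        exact hp2 (hline p (hSf hp) h))
      rcases h with h | h
      · left
        intro p hp
        by_cases hpp : p ∈ ({x, y} : Set E2)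
        · rcases hpp with rfl | hpp
          · exact le_rfl
          · rw [mem_singleton_iff] at hpp; subst hpp; exact hnxy.ge
        · exact h p ⟨hp, hpp⟩
      · right
        intro p hp
        by_cases hpp : p ∈ ({x, y} : Set E2)
        · rcases hpp with rfl | hpp
          · exact le_rfl
          · rw [mem_singleton_iff] at hpp; subst hpp; exact hnxy.le
        · exact h p ⟨hp, hpp⟩
    -- both strict sides are met
    have hpos : ∃ p ∈ A ∪ C, ⟪n, x⟫ < ⟪n, p⟫ := by
      by_contra hcon
      push Not at hcon
      rw [hAC] at hcon
      exact hedge n hn0 (le_of_frontier hPc hn0 hcon) hnxy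
    have hneg : ∃ p ∈ A ∪ C, ⟪-n, x⟫ < ⟪-n, p⟫ := by
      by_contra hcon
      push Not at hcon
      rw [hAC] at hcon
      have hn0' : -n ≠ 0 := neg_ne_zero.mpr hn0
      refine hedge (-n) hn0' (le_of_frontier hPc hn0' hcon) ?_
      rw [inner_neg_left, inner_neg_left, hnxy]
    -- normalise
    set w1 := (⟪w, x - y⟫)⁻¹ • w with hw1
    set v1 := (-(⟪v, y - x⟫)⁻¹) • v with hv1
    have hw1c : ⟪w1, x - y⟫ = 1 := by
      rw [hw1, real_inner_smul_left, inv_mul_cancel₀ hwc.ne']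
    have hv1c : ⟪v1, x - y⟫ = 1 := by
      rw [hv1, real_inner_smul_left, ← neg_sub y x, inner_neg_right, neg_mul_neg,
        inv_mul_cancel₀ hvc.ne']
    have hw1P : ∀ p ∈ A ∪ C, ⟪w1, p⟫ ≤ ⟪w1, x⟫ := by
      intro p hp
      rw [hAC] at hp
      simp only [hw1, real_inner_smul_left]
      exact mul_le_mul_of_nonneg_left (hw p (hfP hp)) (inv_nonneg.mpr hwc.le)
    have hv1P : ∀ p ∈ A ∪ C, ⟪v1, y⟫ ≤ ⟪v1, p⟫ := by
      intro p hp
      rw [hAC] at hp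
      simp only [hv1, real_inner_smul_left, neg_mul]
      exact neg_le_neg (mul_le_mul_of_nonneg_left (hv p (hfP hp)) (inv_nonneg.mpr hvc.le))
    obtain ⟨s, hs⟩ := perp_d hd (v := v1 - w1) (by rw [inner_sub_left, hw1c, hv1c]; simp)
    rw [← hn] at hs
    have hv1e : v1 = w1 + s • n := by rw [← hs]; abel
    have hv1e' : v1 = w1 + (-s) • (-n) := by rw [hv1e]; simp
    -- one lemma for the orientation `A ≤ C`
    have fin : ∀ A' C' : Set E2, A' ∪ C' = A ∪ C → x ∈ A' → y ∈ A' → x ∈ C' → y ∈ C' →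
        (∀ p ∈ A', ⟪n, p⟫ ≤ ⟪n, x⟫) → (∀ p ∈ C', ⟪n, x⟫ ≤ ⟪n, p⟫) → Caps x y A' C' := by
      intro A' C' hU h1 h2 h3 h4 h5 h6
      rcases le_total 0 s with h | h
      · refine caps_alg (w := w1) (n := n) h ?_ ?_ hxy (Or.inl hn) hw1c h5 h6 h3 h4 ?_
        · rwa [hU]
        · rwa [hU, ← hv1e]
        · rwa [hU]
      · refine (caps_alg (w := w1) (n := -n) (s := -s) (by linarith) ?_ ?_ hxy (Or.inr rfl) hw1c
          ?_ ?_ h1 h2 ?_).symm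
        · rwa [union_comm, hU]
        · rwa [union_comm, hU, ← hv1e']
        · intro p hp
          rw [inner_neg_left, inner_neg_left]; exact neg_le_neg (h6 p hp)
        · intro p hp
          rw [inner_neg_left, inner_neg_left]; exact neg_le_neg (h5 p hp)
        · rwa [union_comm, hU]
    obtain ⟨p, hp, hp1⟩ := hpos
    obtain ⟨q, hq, hq1⟩ := hneg
    rw [inner_neg_left, inner_neg_left] at hq1
    rcases hside A hA (hAC ▸ subset_union_left) with hA1 | hA1 <;>
    rcases hside C hC (hAC ▸ subset_union_right) with hC1 | hC1
    · exfalso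
      rcases hp with hp | hp
      · linarith [hA1 p hp]
      · linarith [hC1 p hp]
    · exact fin A C rfl hxA hyA hxC hyC hA1 hC1
    · exact (fin C A (union_comm _ _) hxC hyC hxA hyA hC1 hA1).symm
    · exfalso
      rcases hq with hq | hq
      · linarith [hA1 q hq]
      · linarith [hC1 q hq]

/-- Closedness of the set of times at which a moving cap is squeezed. -/
lemma closed_caps (X Y : ℝ → E2) (α β : ℝ × ℝ → E2) (hX : Continuous X) (hY : Continuous Y)
    (hα : Continuous α) (hβ : Continuous β) :
    IsClosed {t : ℝ | t ∈ Icc (0:ℝ) 1 ∧ ∃ u, u ≠ 0 ∧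
      Good (X t) (Y t) ((fun s => α (t, s)) '' Icc 0 1 ∪ (fun s => β (t, s)) '' Icc 0 1) u} := by
  have hK : IsCompact ((Icc (0:ℝ) 1 ×ˢ Metric.sphere (0:E2) 1) ∩
      {q : ℝ × E2 | ∀ s ∈ Icc (0:ℝ) 1,
        (⟪q.2, Y q.1⟫ ≤ ⟪q.2, α (q.1, s)⟫ ∧ ⟪q.2, α (q.1, s)⟫ ≤ ⟪q.2, X q.1⟫) ∧
        (⟪q.2, Y q.1⟫ ≤ ⟪q.2, β (q.1, s)⟫ ∧ ⟪q.2, β (q.1, s)⟫ ≤ ⟪q.2, X q.1⟫)}) := by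
    apply (isCompact_Icc.prod (isCompact_sphere _ _)).inter_right
    simp only [ofPred_forall]
    refine isClosed_biInter fun s _ => ?_
    refine IsClosed.and (IsClosed.and ?_ ?_) (IsClosed.and ?_ ?_) <;>
    exact isClosed_le (by fun_prop) (by fun_prop)
  convert (hK.image continuous_fst).isClosed using 1
  ext t
  constructor
  · rintro ⟨ht, u, hu0, hu⟩
    have hnu : 0 < ‖u‖ := norm_pos_iff.mpr hu0
    refine ⟨(t, ‖u‖⁻¹ • u), ⟨⟨ht, ?_⟩, ?_⟩, rfl⟩
    · simp [norm_smul, hnu.ne']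
    · intro s hs
      have a := hu _ (Or.inl ⟨s, hs, rfl⟩)
      have b := hu _ (Or.inr ⟨s, hs, rfl⟩)
      have hp : 0 ≤ ‖u‖⁻¹ := by positivity
      simp only [real_inner_smul_left]
      exact ⟨⟨mul_le_mul_of_nonneg_left a.1 hp, mul_le_mul_of_nonneg_left a.2 hp⟩,
        ⟨mul_le_mul_of_nonneg_left b.1 hp, mul_le_mul_of_nonneg_left b.2 hp⟩⟩
  · rintro ⟨⟨t', u⟩, ⟨⟨ht, hu⟩, h⟩, rfl⟩
    refine ⟨ht, u, ?_, ?_⟩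
    · rintro rfl; simp at hu
    · rintro p (⟨s, hs, rfl⟩ | ⟨s, hs, rfl⟩)
      · exact (h s hs).1
      · exact (h s hs).2

lemma repar_ext {f : ℝ → ℝ} (hf : IsRepar f) :
    ∃ F : ℝ → ℝ, Continuous F ∧ (∀ t ∈ Icc (0:ℝ) 1, F t = f t) ∧
      (∀ t, F t ∈ Icc (0:ℝ) 1) ∧ F 0 = 0 ∧ F 1 = 1 := by
  obtain ⟨hm, hmap, hsur⟩ := hf
  let φ : Icc (0:ℝ) 1 → Icc (0:ℝ) 1 := fun t => ⟨f t, hmap t.2⟩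
  have hφm : Monotone φ := fun a b hab => hm a.2 b.2 hab
  have hφs : Function.Surjective φ := by
    rintro ⟨z, hz⟩
    obtain ⟨t, ht, h⟩ := hsur hz
    exact ⟨⟨t, ht⟩, Subtype.ext h⟩
  have hc := hφm.continuous_of_surjective hφs
  have hF : ∀ t ∈ Icc (0:ℝ) 1, ((φ (projIcc 0 1 zero_le_one t) : Icc (0:ℝ) 1) : ℝ) = f t := by
    intro t ht
    rw [projIcc_of_mem _ ht]
  refine ⟨fun t => φ (projIcc 0 1 zero_le_one t), ?_, hF, fun t => Subtype.property _, ?_, ?_⟩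
  · exact continuous_subtype_val.comp (hc.comp continuous_projIcc)
  · simp only
    rw [hF 0 (by simp)]
    obtain ⟨t, ht, h⟩ := hsur (show (0:ℝ) ∈ Icc (0:ℝ) 1 by simp)
    have := hm (show (0:ℝ) ∈ Icc (0:ℝ) 1 by simp) ht ht.1
    linarith [(hmap (show (0:ℝ) ∈ Icc (0:ℝ) 1 by simp)).1]
  · simp only
    rw [hF 1 (by simp)]
    obtain ⟨t, ht, h⟩ := hsur (show (1:ℝ) ∈ Icc (0:ℝ) 1 by simp)
    have := hm ht (show (1:ℝ) ∈ Icc (0:ℝ) 1 by simp) ht.2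
    linarith [(hmap (show (1:ℝ) ∈ Icc (0:ℝ) 1 by simp)).2]

lemma curve_ext {R : ℝ → E2} (hR : ContinuousOn R (Icc 0 1)) :
    ∃ R' : ℝ → E2, Continuous R' ∧ EqOn R' R (Icc 0 1) :=
  ⟨IccExtend zero_le_one ((Icc (0:ℝ) 1).domRestrict R),
    (continuousOn_iff_continuous_domRestrict.mp hR).Icc_extend',
    fun t ht => by rw [IccExtend_of_mem _ _ ht]; rfl⟩

lemma image_scale (R : ℝ → E2) {r : ℝ} (hr : 0 ≤ r) :
    (fun s => R (s * r)) '' Icc 0 1 = R '' Icc 0 r := by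
  ext p
  constructor
  · rintro ⟨s, hs, rfl⟩
    exact ⟨s * r, ⟨mul_nonneg hs.1 hr, by nlinarith [hs.2]⟩, rfl⟩
  · rintro ⟨s, hs, rfl⟩
    rcases hr.eq_or_lt with h | h
    · subst h
      have : s = 0 := le_antisymm hs.2 hs.1
      exact ⟨0, by simp, by simp [this]⟩
    · refine ⟨s / r, ⟨div_nonneg hs.1 hr, (div_le_one h).mpr hs.2⟩, ?_⟩
      simp only
      rw [div_mul_cancel₀ _ h.ne']

lemma image_rev (R : ℝ → E2) (r : ℝ) :
    (fun s => R (1 - s)) '' Icc 0 (1 - r) = R '' Icc r 1 := by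
  have : (fun s => R (1 - s)) = R ∘ (fun s => 1 - s) := rfl
  rw [this, image_comp]
  simp

/-- The theorem for everywhere continuous data. -/
lemma main_cont
    (P : Set E2) (hPc : IsCompact P) (hPconv : Convex ℝ P) (hne : (interior P).Nonempty)
    (R B : ℝ → E2)
    (hRc : Continuous R) (hBc : Continuous B)
    (hRinj : InjOn R (Icc 0 1)) (hBinj : InjOn B (Icc 0 1))
    (h0 : R 0 = B 0) (h1 : R 1 = B 1)
    (hbd : R '' Icc (0:ℝ) 1 ∪ B '' Icc (0:ℝ) 1 = frontier P)
    (hint : R '' Icc (0:ℝ) 1 ∩ B '' Icc (0:ℝ) 1 = {R 0, R 1})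
    (f g : ℝ → ℝ) (hf : Continuous f) (hg : Continuous g)
    (hfm : ∀ t, f t ∈ Icc (0:ℝ) 1) (hgm : ∀ t, g t ∈ Icc (0:ℝ) 1)
    (hf0 : f 0 = 0) (hf1 : f 1 = 1) (hg0 : g 0 = 0) (hg1 : g 1 = 1) :
    ∃ t ∈ Icc (0:ℝ) 1, ∃ u : E2, u ≠ 0 ∧ Good (R (f t)) (B (g t)) (frontier P) u := by
  have m0 : (0:ℝ) ∈ Icc (0:ℝ) 1 := by simp
  have m1 : (1:ℝ) ∈ Icc (0:ℝ) 1 := by simp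
  have hcross : ∀ s ∈ Icc (0:ℝ) 1, ∀ t ∈ Icc (0:ℝ) 1, R s = B t →
      (s = 0 ∧ t = 0) ∨ (s = 1 ∧ t = 1) := by
    intro s hs t ht h
    have hm : R s ∈ ({R 0, R 1} : Set E2) := hint ▸ ⟨⟨s, hs, rfl⟩, ⟨t, ht, h.symm⟩⟩
    rcases hm with hm | hm
    · left
      refine ⟨hRinj hs m0 hm, hBinj ht m0 ?_⟩
      rw [← h, hm, h0]
    · rw [mem_singleton_iff] at hm
      right
      refine ⟨hRinj hs m1 hm, hBinj ht m1 ?_⟩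
      rw [← h, hm, h1]
  let A : ℝ → Set E2 := fun t => R '' Icc 0 (f t) ∪ B '' Icc 0 (g t)
  let C : ℝ → Set E2 := fun t => R '' Icc (f t) 1 ∪ B '' Icc (g t) 1
  have hU : ∀ t, A t ∪ C t = frontier P := by
    intro t
    rw [← hbd]
    simp only [A, C]
    have e1 : R '' Icc 0 1 = R '' Icc 0 (f t) ∪ R '' Icc (f t) 1 := by
      rw [← image_union, Icc_union_Icc_eq_Icc (hfm t).1 (hfm t).2]
    have e2 : B '' Icc 0 1 = B '' Icc 0 (g t) ∪ B '' Icc (g t) 1 := by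
      rw [← image_union, Icc_union_Icc_eq_Icc (hgm t).1 (hgm t).2]
    rw [e1, e2]
    ac_rfl
  obtain ⟨e, he⟩ : ∃ e : E2, e ≠ 0 := exists_ne 0
  have hsing : ∀ z : E2, Good z z {z} e := by
    rintro z p rfl; exact ⟨le_rfl, le_rfl⟩
  -- combined property at each time
  have hcaps : ∀ t, Caps (R (f t)) (B (g t)) (A t) (C t) := by
    intro t
    by_cases hxy : R (f t) = B (g t)
    · rcases hcross _ (hfm t) _ (hgm t) hxy with ⟨e1, e2⟩ | ⟨e1, e2⟩
      · have hA : A t = {R 0} := by simp [A, e1, e2, h0]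
        have hC : A t ∪ C t = C t := by
          rw [union_eq_right, hA, singleton_subset_iff]
          exact Or.inl ⟨0, by simp [e1], rfl⟩
        refine ⟨Or.inl ⟨e, he, ?_⟩, fun _ h => ?_⟩
        · rw [hA, e1, e2, ← h0]; exact hsing _
        · rwa [hC]
      · have hC : C t = {R 1} := by simp [C, e1, e2, h1]
        have hA : A t ∪ C t = A t := by
          rw [union_eq_left, hC, singleton_subset_iff]
          exact Or.inl ⟨1, by simp [e1], rfl⟩
        refine ⟨Or.inr ⟨e, he, ?_⟩, fun h _ => ?_⟩
        · rw [hC, e1, e2, ← h1]; exact hsing _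
        · rwa [hA]
    · have hft := hfm t
      have hgt := hgm t
      have hsubf0 : Icc 0 (f t) ⊆ Icc (0:ℝ) 1 := Icc_subset_Icc_right hft.2
      have hsubf1 : Icc (f t) 1 ⊆ Icc (0:ℝ) 1 := Icc_subset_Icc_left hft.1
      have hsubg0 : Icc 0 (g t) ⊆ Icc (0:ℝ) 1 := Icc_subset_Icc_right hgt.2
      have hsubg1 : Icc (g t) 1 ⊆ Icc (0:ℝ) 1 := Icc_subset_Icc_left hgt.1
      have hn1 : ¬ (f t = 1 ∧ g t = 1) := by
        rintro ⟨e1, e2⟩; rw [e1, e2] at hxy; exact hxy h1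
      have hn0 : ¬ (f t = 0 ∧ g t = 0) := by
        rintro ⟨e1, e2⟩; rw [e1, e2] at hxy; exact hxy h0
      have hA : IsArc (A t) (R (f t)) (B (g t)) := by
        refine isArc_join R B hRc hBc _ _ hft.1 hgt.1 (hRinj.mono hsubf0) (hBinj.mono hsubg0) h0 ?_
        intro s hs s' hs' h
        rcases hcross s (hsubf0 hs) s' (hsubg0 hs') h with ⟨a, b⟩ | ⟨a, b⟩
        · rw [a]
        · exact absurd ⟨le_antisymm hft.2 (a ▸ hs.2), le_antisymm hgt.2 (b ▸ hs'.2)⟩ hn1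
      have hC : IsArc (C t) (R (f t)) (B (g t)) := by
        have := isArc_join (fun s => R (1 - s)) (fun s => B (1 - s)) (by fun_prop) (by fun_prop)
          (1 - f t) (1 - g t) (by linarith [hft.2]) (by linarith [hgt.2])
          (by
            intro a ha b hb h
            have := hRinj (x₁ := 1 - a) (x₂ := 1 - b) ⟨by linarith [ha.2, hft.1], by linarith [ha.1]⟩
              ⟨by linarith [hb.2, hft.1], by linarith [hb.1]⟩ h
            linarith)
          (by
            intro a ha b hb h
            have := hBinj (x₁ := 1 - a) (x₂ := 1 - b) ⟨by linarith [ha.2, hgt.1], by linarith [ha.1]⟩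
              ⟨by linarith [hb.2, hgt.1], by linarith [hb.1]⟩ h
            linarith)
          (by simpa using h1)
          (by
            intro a ha b hb h
            rcases hcross (1 - a) ⟨by linarith [ha.2, hft.1], by linarith [ha.1]⟩ (1 - b)
              ⟨by linarith [hb.2, hgt.1], by linarith [hb.1]⟩ h with ⟨c, d⟩ | ⟨c, d⟩
            · exact absurd ⟨by linarith [ha.2, hft.1], by linarith [hb.2, hgt.1]⟩ hn0
            · show R (1 - a) = R (1 - 0)
              rw [c]; simp)
        rw [image_rev, image_rev] at this
        simpa [C] using this
      refine caps_main hPc hPconv hne hxy hA hC (hU t) ?_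
        (Or.inl ⟨f t, ⟨hft.1, le_rfl⟩, rfl⟩) (Or.inr ⟨g t, ⟨hgt.1, le_rfl⟩, rfl⟩)
        (Or.inl ⟨f t, ⟨le_rfl, hft.2⟩, rfl⟩) (Or.inr ⟨g t, ⟨le_rfl, hgt.2⟩, rfl⟩)
      rintro p ⟨⟨s, hs, rfl⟩ | ⟨s, hs, rfl⟩, ⟨s', hs', h⟩ | ⟨s', hs', h⟩⟩
      · have := hRinj (hsubf1 hs') (hsubf0 hs) h
        left
        rw [le_antisymm hs.2 (this ▸ hs'.1)]
      · rcases hcross s (hsubf0 hs) s' (hsubg1 hs') h.symm with ⟨a, b⟩ | ⟨a, b⟩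
        · right
          rw [mem_singleton_iff, ← h, b, le_antisymm (b ▸ hs'.1) hgt.1]
        · left
          rw [a, le_antisymm hft.2 (a ▸ hs.2)]
      · rcases hcross s' (hsubf1 hs') s (hsubg0 hs) h with ⟨a, b⟩ | ⟨a, b⟩
        · left
          rw [← h, a, le_antisymm (a ▸ hs'.1) hft.1]
        · right
          rw [mem_singleton_iff, b, le_antisymm hgt.2 (b ▸ hs.2)]
      · have := hBinj (hsubg1 hs') (hsubg0 hs) h
        right
        rw [mem_singleton_iff, le_antisymm hs.2 (this ▸ hs'.1)]
  have hT1 : IsClosed {t : ℝ | t ∈ Icc (0:ℝ) 1 ∧ ∃ u, u ≠ 0 ∧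
      Good (R (f t)) (B (g t)) (A t) u} := by
    have := closed_caps (fun t => R (f t)) (fun t => B (g t)) (fun q => R (q.2 * f q.1))
      (fun q => B (q.2 * g q.1)) (by fun_prop) (by fun_prop) (by fun_prop) (by fun_prop)
    convert this using 7 with t
    simp only [A]
    rw [image_scale R (hfm t).1, image_scale B (hgm t).1]
  have hT2 : IsClosed {t : ℝ | t ∈ Icc (0:ℝ) 1 ∧ ∃ u, u ≠ 0 ∧
      Good (R (f t)) (B (g t)) (C t) u} := by
    have := closed_caps (fun t => R (f t)) (fun t => B (g t)) (fun q => R (1 - q.2 * (1 - f q.1)))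
      (fun q => B (1 - q.2 * (1 - g q.1))) (by fun_prop) (by fun_prop) (by fun_prop) (by fun_prop)
    convert this using 7 with t
    simp only [C]
    rw [image_scale (fun s => R (1 - s)) (sub_nonneg.mpr (hfm t).2),
      image_scale (fun s => B (1 - s)) (sub_nonneg.mpr (hgm t).2), image_rev, image_rev]
  obtain ⟨t, ht, ⟨-, h1t⟩, ⟨-, h2t⟩⟩ := isPreconnected_closed_iff.mp
    (isPreconnected_Icc (a := (0:ℝ)) (b := 1)) _ _ hT1 hT2
    (by
      intro t ht
      rcases (hcaps t).1 with h | h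
      · exact Or.inl ⟨ht, h⟩
      · exact Or.inr ⟨ht, h⟩)
    ⟨0, m0, m0, e, he, by
      have hA : A 0 = {R 0} := by simp [A, hf0, hg0, h0]
      rw [hA, hf0, hg0, ← h0]; exact hsing _⟩
    ⟨1, m1, m1, e, he, by
      have hC : C 1 = {R 1} := by simp [C, hf1, hg1, h1]
      rw [hC, hf1, hg1, ← h1]; exact hsing _⟩
  have := (hcaps t).2 h1t h2t
  rw [hU t] at this
  exact ⟨t, ht, this⟩

/-- For any matching `(f, g)` between curves `R` and `B` that
bound a compact convex set `P`, there is a time `t` and a direction `u ≠ 0` such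
that the line through `R (f t)` with normal `u` and the parallel line through
`B (g t)` are tangent to `P` with `P` between them. -/
theorem exists_parallel_tangents
    (P : Set E2) (hPc : IsCompact P) (hPconv : Convex ℝ P)
    (R B : ℝ → E2)
    (hRc : ContinuousOn R (Icc 0 1)) (hBc : ContinuousOn B (Icc 0 1))
    (hRinj : InjOn R (Icc 0 1)) (hBinj : InjOn B (Icc 0 1))
    (h0 : R 0 = B 0) (h1 : R 1 = B 1)
    (hbd : R '' Icc (0:ℝ) 1 ∪ B '' Icc (0:ℝ) 1 = frontier P)
    (hint : R '' Icc (0:ℝ) 1 ∩ B '' Icc (0:ℝ) 1 = {R 0, R 1})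
    (f g : ℝ → ℝ) (hf : IsRepar f) (hg : IsRepar g) :
    ∃ t ∈ Icc (0:ℝ) 1, ∃ u : E2, u ≠ 0 ∧
      ∀ p ∈ P, ⟪u, B (g t)⟫ ≤ ⟪u, p⟫ ∧ ⟪u, p⟫ ≤ ⟪u, R (f t)⟫ := by
  have m0 : (0:ℝ) ∈ Icc (0:ℝ) 1 := by simp
  have m1 : (1:ℝ) ∈ Icc (0:ℝ) 1 := by simp
  have hfP : frontier P ⊆ P := hPc.isClosed.frontier_subset
  by_cases hne : (interior P).Nonempty
  · obtain ⟨R', hR'c, hR'⟩ := curve_ext hRc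
    obtain ⟨B', hB'c, hB'⟩ := curve_ext hBc
    obtain ⟨F, hFc, hFe, hFm, hF0, hF1⟩ := repar_ext hf
    obtain ⟨G, hGc, hGe, hGm, hG0, hG1⟩ := repar_ext hg
    obtain ⟨t, ht, u, hu0, hu⟩ := main_cont P hPc hPconv hne R' B' hR'c hB'c
      (hRinj.congr hR'.symm) (hBinj.congr hB'.symm) (by rw [hR' m0, hB' m0, h0])
      (by rw [hR' m1, hB' m1, h1])
      (by rw [hR'.image_eq, hB'.image_eq, hbd])
      (by rw [hR'.image_eq, hB'.image_eq, hint, hR' m0, hR' m1])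
      F G hFc hGc hFm hGm hF0 hF1 hG0 hG1
    rw [hR' (hFm t), hB' (hGm t), hFe t ht, hGe t ht] at hu
    refine ⟨t, ht, u, hu0, fun p hp => ⟨?_, ?_⟩⟩
    · have := le_of_frontier hPc (u := -u) (neg_ne_zero.mpr hu0) (m := -⟪u, B (g t)⟫)
        (fun q hq => by rw [inner_neg_left]; exact neg_le_neg (hu q hq).1) p hp
      rw [inner_neg_left] at this
      linarith
    · exact le_of_frontier hPc hu0 (fun q hq => (hu q hq).2) p hp
  · have hRP : ∀ s ∈ Icc (0:ℝ) 1, R s ∈ P := fun s hs => hfP (hbd ▸ Or.inl ⟨s, hs, rfl⟩)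
    have hBP : ∀ s ∈ Icc (0:ℝ) 1, B s ∈ P := fun s hs => hfP (hbd ▸ Or.inr ⟨s, hs, rfl⟩)
    obtain ⟨w, hw0, hw⟩ := exists_const_dir hPconv hne (hRP 0 m0)
    refine ⟨0, m0, w, hw0, fun p hp => ?_⟩
    rw [hw p hp, hw _ (hRP _ (hf.2.1 m0)), hw _ (hBP _ (hg.2.1 m0))]
    exact ⟨le_rfl, le_rfl⟩
end
end
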